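/- Let (Y₁, μ₁) and (Y₂, μ₂) be measurable spaces with σ-finite measures, and let {f(·,·;θ) : θ ∈ Θ} be a family of probability density functions on Y₁ × Y₂ with respect to the product measure μ₁ ⊗ μ₂ which is complete. Let w : Y₁ × Y₂ → ℝ be measurable and such that for every θ ∈ Θ the function w·f(·,·;θ) is (μ₁ ⊗ μ₂)-integrable and, for μ₁-almost every y₁ ∈ Y₁, ∫ w(y₁,y₂) f(y₁,y₂;θ) dμ₂(y₂) = 0. Then for every θ ∈ Θ, w(y₁,y₂)·f(y₁,y₂;θ) = 0 for (μ₁ ⊗ μ₂)-almost every (y₁,y₂). -/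

import Mathlib

open MeasureTheory

/-- Completeness of a family `f` of densities with respect to `μ`: a statistic `t` whose integral
against every `f θ` vanishes is itself null against every `f θ`. Signed and complex densities of
arbitrary mass are allowed. Integrability of `t * f θ` is a separate premise because the Bochner
integral of a non-integrable function is `0` by convention. -/
def IsCompleteFamily {𝕜 α Θ : Type*} [RCLike 𝕜] [MeasurableSpace α]
    (f : Θ → α → 𝕜) (μ : Measure α) : Prop :=
  ∀ t : α → 𝕜, Measurable t → (∀ θ, Integrable (fun x => t x * f θ x) μ) →
    (∀ θ, ∫ x, t x * f θ x ∂μ = 0) → ∀ θ, ∀ᵐ x ∂μ, t x * f θ x = 0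

theorem integral_prod_eq_zero_of_ae_integral_eq_zero {α β E : Type*}
    [MeasurableSpace α] [MeasurableSpace β] [NormedAddCommGroup E] [NormedSpace ℝ E]
    {μ : Measure α} {ν : Measure β} [SFinite μ] [SFinite ν] {g : α × β → E}
    (hg : Integrable g (μ.prod ν)) (hg_zero : ∀ᵐ x ∂μ, ∫ y, g (x, y) ∂ν = 0) :
    ∫ z, g z ∂(μ.prod ν) = 0 :=
  calc
    ∫ z, g z ∂(μ.prod ν) = ∫ x, ∫ y, g (x, y) ∂ν ∂μ := integral_prod g hg
    _ = 0 := integral_eq_zero_of_ae hg_zero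

theorem conditional_complete_general {𝕜 α β Θ : Type*} [RCLike 𝕜]
    [MeasurableSpace α] [MeasurableSpace β] {μ : Measure α} {ν : Measure β}
    [SFinite μ] [SFinite ν] {f : Θ → α × β → 𝕜} (hf : IsCompleteFamily f (μ.prod ν))
    {w : α × β → 𝕜} (hw : Measurable w)
    (hw_int : ∀ θ, Integrable (fun z => w z * f θ z) (μ.prod ν))
    (hw_cond : ∀ θ, ∀ᵐ x ∂μ, ∫ y, w (x, y) * f θ (x, y) ∂ν = 0) :
    ∀ θ, ∀ᵐ z ∂(μ.prod ν), w z * f θ z = 0 :=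
  hf w hw hw_int fun θ =>
    integral_prod_eq_zero_of_ae_integral_eq_zero (hw_int θ) (hw_cond θ)

/-- **Lemma 3.1(b)** (Lu–Copas): the conditional families of the second component given the
first inherit completeness from the joint family, in the sense that any function whose
conditional integral against the joint density vanishes for a.e. `y₁` and all `θ` must itself
vanish almost everywhere against the joint density. -/
theorem conditional_complete
    {Y₁ Y₂ : Type*} [MeasurableSpace Y₁] [MeasurableSpace Y₂]
    (μ₁ : Measure Y₁) (μ₂ : Measure Y₂) [SigmaFinite μ₁] [SigmaFinite μ₂]
    {Θ : Type*} (f : Θ → Y₁ × Y₂ → ℝ)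
    (hf_meas : ∀ θ, Measurable (f θ))
    (hf_nonneg : ∀ θ y, 0 ≤ f θ y)
    (hf_int : ∀ θ, ∫ y, f θ y ∂(μ₁.prod μ₂) = 1)
    -- completeness of the joint family {f(·;θ) : θ ∈ Θ}
    (hf_complete : ∀ t : Y₁ × Y₂ → ℝ, Measurable t →
      (∀ θ, Integrable (fun y => t y * f θ y) (μ₁.prod μ₂)) →
      (∀ θ, ∫ y, t y * f θ y ∂(μ₁.prod μ₂) = 0) →
      ∀ θ, ∀ᵐ y ∂(μ₁.prod μ₂), t y * f θ y = 0)
    (w : Y₁ × Y₂ → ℝ) (hw_meas : Measurable w)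
    (hw_int : ∀ θ, Integrable (fun y => w y * f θ y) (μ₁.prod μ₂))
    (hw_cond : ∀ θ, ∀ᵐ y₁ ∂μ₁, ∫ y₂, w (y₁, y₂) * f θ (y₁, y₂) ∂μ₂ = 0) :
    ∀ θ, ∀ᵐ y ∂(μ₁.prod μ₂), w y * f θ y = 0 := by
  exact conditional_complete_general hf_complete hw_meas hw_int hw_cond
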